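/- There exists a language in trPCCFL that belongs neither to shuffleCFL nor to traceCFL. -/

import Mathlib

/-- `IsInterleaving w v u` means `u` is an interleaving of `w` and `v`. -/
inductive IsInterleaving {α : Type} : List α → List α → List α → Prop
  | nil : IsInterleaving [] [] []
  | left {a : α} {w v u : List α} : IsInterleaving w v u → IsInterleaving (a :: w) v (a :: u)
  | right {a : α} {w v u : List α} : IsInterleaving w v u → IsInterleaving w (a :: v) (a :: u)

/-- Shuffle of two languages. -/
def shuffleLang {α : Type} (L K : Set (List α)) : Set (List α) :=
  {u | ∃ w ∈ L, ∃ v ∈ K, IsInterleaving w v u}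

/-- A partially-commutative context-free grammar in Greibach form. -/
structure PCGrammar (α : Type) : Type 1 where
  V : Type
  finV : Finite V
  start : V
  prods : Set (V × α × List V)
  finP : prods.Finite
  indep : V → V → Prop
  indep_symm : ∀ {X Y : V}, indep X Y → indep Y X
  indep_irrefl : ∀ X : V, ¬ indep X X

/-- `PCDerives G γ w` : configuration `γ` derives the empty configuration producing word `w`,
using production steps (at the head) and swap steps of independent adjacent nonterminals. -/
inductive PCDerives {α : Type} (G : PCGrammar α) : List G.V → List α → Prop
  | nil : PCDerives G [] []
  | prod {X : G.V} {a : α} {γ β : List G.V} {w : List α} :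
      (X, a, γ) ∈ G.prods → PCDerives G (γ ++ β) w → PCDerives G (X :: β) (a :: w)
  | swap {η β : List G.V} {X Y : G.V} {w : List α} :
      G.indep X Y → PCDerives G (η ++ Y :: X :: β) w → PCDerives G (η ++ X :: Y :: β) w

/-- The language generated by a PC-grammar. -/
def PCGrammar.lang {α : Type} (G : PCGrammar α) : Set (List α) :=
  {w | PCDerives G [G.start] w}

/-- The class of partially-commutative context-free languages. -/
def IsPCCFL {α : Type} (L : Set (List α)) : Prop :=
  ∃ G : PCGrammar α, G.lang = L

/-- The dependence relation (complement of independence) is transitive. -/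
def PCGrammar.depTransitive {α : Type} (G : PCGrammar α) : Prop :=
  ∀ X Y Z : G.V, ¬ G.indep X Y → ¬ G.indep Y Z → ¬ G.indep X Z

/-- The subclass of PCCFL given by grammars with transitive dependence. -/
def IsTrPCCFL {α : Type} (L : Set (List α)) : Prop :=
  ∃ G : PCGrammar α, G.depTransitive ∧ G.lang = L

/-- Terms of a PA-grammar (shuffle context-free grammar). -/
inductive PATerm (V : Type) : Type
  | eps : PATerm V
  | var (X : V) : PATerm V
  | seq (t u : PATerm V) : PATerm V
  | par (t u : PATerm V) : PATerm V

/-- Structural equivalence of PA-terms: associativity of both compositions,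
commutativity of parallel composition, and neutrality of the empty term. -/
inductive PAEq {V : Type} : PATerm V → PATerm V → Prop
  | refl (t : PATerm V) : PAEq t t
  | symm {t u : PATerm V} : PAEq t u → PAEq u t
  | trans {t u v : PATerm V} : PAEq t u → PAEq u v → PAEq t v
  | seq_assoc (t u v : PATerm V) : PAEq ((t.seq u).seq v) (t.seq (u.seq v))
  | par_assoc (t u v : PATerm V) : PAEq ((t.par u).par v) (t.par (u.par v))
  | par_comm (t u : PATerm V) : PAEq (t.par u) (u.par t)
  | seq_eps_left (t : PATerm V) : PAEq (PATerm.eps.seq t) t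
  | seq_eps_right (t : PATerm V) : PAEq (t.seq PATerm.eps) t
  | par_eps (t : PATerm V) : PAEq (t.par PATerm.eps) t
  | seq_congr {t t' u u' : PATerm V} : PAEq t t' → PAEq u u' → PAEq (t.seq u) (t'.seq u')
  | par_congr {t t' u u' : PATerm V} : PAEq t t' → PAEq u u' → PAEq (t.par u) (t'.par u')

/-- Single steps of a PA-grammar with production set `P`. -/
inductive PAStep {V α : Type} (P : Set (V × α × PATerm V)) : PATerm V → α → PATerm V → Prop
  | prod {X : V} {a : α} {t : PATerm V} : (X, a, t) ∈ P → PAStep P (PATerm.var X) a t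
  | seq_left {t t' u : PATerm V} {a : α} : PAStep P t a t' → PAStep P (t.seq u) a (t'.seq u)
  | par_left {t t' u : PATerm V} {a : α} : PAStep P t a t' → PAStep P (t.par u) a (t'.par u)
  | par_right {t u u' : PATerm V} {a : α} : PAStep P u a u' → PAStep P (t.par u) a (t.par u')

/-- `PAGen P t w` : term `t` derives the empty term producing word `w`
(terms are considered up to structural equivalence). -/
inductive PAGen {V α : Type} (P : Set (V × α × PATerm V)) : PATerm V → List α → Prop
  | done : PAGen P PATerm.eps []
  | eqv {t t' : PATerm V} {w : List α} : PAEq t t' → PAGen P t' w → PAGen P t w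
  | step {t t' : PATerm V} {a : α} {w : List α} :
      PAStep P t a t' → PAGen P t' w → PAGen P t (a :: w)

/-- A PA-grammar (shuffle context-free grammar). -/
structure PAGrammar (α : Type) : Type 1 where
  V : Type
  finV : Finite V
  start : V
  prods : Set (V × α × PATerm V)
  finP : prods.Finite

/-- The language generated by a PA-grammar. -/
def PAGrammar.lang {α : Type} (G : PAGrammar α) : Set (List α) :=
  {w | PAGen G.prods (PATerm.var G.start) w}

/-- The class of languages of PA-grammars (context-free grammars with shuffle). -/
def IsShuffleCFL {α : Type} (L : Set (List α)) : Prop :=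
  ∃ G : PAGrammar α, G.lang = L

/-- A single swap of two adjacent letters independent according to `J`. -/
inductive AdjSwap {α : Type} (J : α → α → Prop) : List α → List α → Prop
  | swap (x y : List α) {a b : α} : J a b → AdjSwap J (x ++ a :: b :: y) (x ++ b :: a :: y)

/-- Trace equivalence: finitely many swaps of adjacent independent letters. -/
def TraceEquiv {α : Type} (J : α → α → Prop) : List α → List α → Prop :=
  Relation.ReflTransGen (AdjSwap J)

/-- Trace closure of a language with respect to letter-independence `J`. -/
def traceClosure {α : Type} (J : α → α → Prop) (L : Set (List α)) : Set (List α) :=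
  {w | ∃ v ∈ L, TraceEquiv J v w}

/-- The class of trace closures of context-free languages. -/
def IsTraceCFL {α : Type} (L : Set (List α)) : Prop :=
  ∃ J : α → α → Prop, (∀ a b, J a b → J b a) ∧ (∀ a, ¬ J a a) ∧
    ∃ L₀ : Language α, L₀.IsContextFree ∧ traceClosure J L₀ = L

/-- `listPow s m` is the word `s^m`. -/
def listPow {α : Type} (s : List α) (m : ℕ) : List α :=
  (List.replicate m s).flatten

/-- The shuffle-pumping condition. -/
def ShufflePumping {α : Type} (L : Set (List α)) : Prop :=
  ∃ N : ℕ, ∀ w ∈ L, w.length > N →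
    ∃ x y z s t : List α,
      (∃ yt u : List α, IsInterleaving y t yt ∧ IsInterleaving (s ++ yt) z u ∧ w = x ++ u) ∧
      1 ≤ s.length ∧ (s ++ y ++ t).length ≤ N ∧
      ∀ m : ℕ, x ++ listPow s m ++ y ++ listPow t m ++ z ∈ L

/-- The concatenation-pumping condition. -/
def ConcatPumping {α : Type} (L : Set (List α)) : Prop :=
  ∃ N : ℕ, ∀ w ∈ L, w.length > N →
    ∃ x y z s t : List α,
      w = x ++ y ++ z ∧
      1 ≤ (s ++ t).length ∧ (s ++ t).length ≤ N ∧
      ∀ m : ℕ, x ++ listPow s m ++ y ++ listPow t m ++ z ∈ L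


/-! Generalized systems with concatenation and shuffle. -/

structure GSys (T α : Type) where
  rE : T → Prop
  rU : T → T → Prop
  rA : T → α → T → Prop
  rS : T → T → T → Prop
  rP : T → T → T → Prop

inductive GDer {T α : Type} (G : GSys T α) : T → List α → Prop
  | eps {t : T} : G.rE t → GDer G t []
  | unit {t t' : T} {w : List α} : G.rU t t' → GDer G t' w → GDer G t w
  | pre {t t' : T} {a : α} {w : List α} : G.rA t a t' → GDer G t' w → GDer G t (a :: w)
  | seq {t t₁ t₂ : T} {u v : List α} : G.rS t t₁ t₂ → GDer G t₁ u → GDer G t₂ v →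
      GDer G t (u ++ v)
  | par {t t₁ t₂ : T} {u v w : List α} : G.rP t t₁ t₂ → GDer G t₁ u → GDer G t₂ v →
      IsInterleaving u v w → GDer G t w

structure GSys.Closed {T α : Type} (G : GSys T α) (F : Set T) : Prop where
  cU : ∀ t t', t ∈ F → G.rU t t' → t' ∈ F
  cA : ∀ t a t', t ∈ F → G.rA t a t' → t' ∈ F
  cS : ∀ t t₁ t₂, t ∈ F → G.rS t t₁ t₂ → t₁ ∈ F ∧ t₂ ∈ F
  cP : ∀ t t₁ t₂, t ∈ F → G.rP t t₁ t₂ → t₁ ∈ F ∧ t₂ ∈ F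

theorem IsInterleaving.swap' {α : Type} {u v w : List α} (h : IsInterleaving u v w) :
    IsInterleaving v u w := by
  induction h with
  | nil => exact .nil
  | left _ ih => exact .right ih
  | right _ ih => exact .left ih

theorem IsInterleaving.perm' {α : Type} {u v w : List α} (h : IsInterleaving u v w) :
    w.Perm (u ++ v) := by
  induction h with
  | nil => exact .refl _
  | left _ ih => exact ih.cons _
  | right _ ih => exact (ih.cons _).trans List.perm_middle.symm

theorem IsInterleaving.nil_right' {α : Type} (u : List α) : IsInterleaving u [] u := by
  induction u with
  | nil => exact .nil
  | cons a u ih => exact .left ih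

theorem IsInterleaving.nil_left' {α : Type} (u : List α) : IsInterleaving [] u u :=
  (IsInterleaving.nil_right' u).swap'

theorem IsInterleaving.eq_of_nil_right {α : Type} {u w : List α} (h : IsInterleaving u [] w) :
    w = u := by
  generalize hv : ([] : List α) = v at h
  induction h with
  | nil => rfl
  | left _ ih => rw [ih hv]
  | right _ ih => simp at hv

theorem IsInterleaving.insert' {α : Type} (p q u : List α) :
    IsInterleaving u (p ++ q) (p ++ u ++ q) := by
  induction p with
  | cons a p ih => exact .right ih
  | nil =>
    induction u with
    | nil => simpa using IsInterleaving.nil_left' q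
    | cons a u ih => exact .left ih

/-- the word `a^n c^n f b^n` with letters `a = 0`, `c = 1`, `f = 2`, `b = 3`. -/
def wordW (n : ℕ) : List (Fin 4) :=
  List.replicate n 0 ++ List.replicate n 1 ++ 2 :: List.replicate n 3

structure LangProps (L : Set (List (Fin 4))) : Prop where
  h1 : ∀ w ∈ L, ((w.count 0 : ℤ) - w.count 3).natAbs ≤ 2 ∧ ((w.count 0 : ℤ) - w.count 1).natAbs ≤ 2
  h2 : ∀ p q : List (Fin 4), p ++ 2 :: q ∈ L → 2 < (p ++ 2 :: q).length → p.count 0 = p.count 1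
  h3 : ∀ p q : List (Fin 4), p ++ 3 :: q ∈ L → 2 < (p ++ 3 :: q).length → (0 : Fin 4) ∉ q
  hw : ∀ n, 2 ≤ n → wordW n ∈ L

theorem wordW_sorted (n : ℕ) : (wordW n).Pairwise (· ≤ ·) := by
  unfold wordW
  simp only [List.pairwise_append, List.pairwise_cons, List.pairwise_replicate, List.mem_replicate,
    List.mem_append, List.mem_cons]
  refine ⟨⟨by simp, by simp, ?_⟩, ⟨?_, by simp⟩, ?_⟩
  · rintro a ⟨-, rfl⟩ b ⟨-, rfl⟩; decide
  · rintro b ⟨-, rfl⟩; decide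
  · rintro a (⟨-, rfl⟩ | ⟨-, rfl⟩) b (rfl | ⟨-, rfl⟩) <;> decide

theorem wordW_count (n : ℕ) : (wordW n).count 1 = n ∧ (wordW n).count 2 = 1 ∧
    (wordW n).length = 3 * n + 1 := by
  unfold wordW
  refine ⟨?_, ?_, ?_⟩
  · simp [List.count_replicate]
  · simp [List.count_replicate]
  · simp; omega

/-- the parallel component without `f` is empty. -/
theorem par_empty {L : Set (List (Fin 4))} (hL : LangProps L) {n : ℕ} (hn : 1 ≤ n)
    {x z v v₁ v₂ : List (Fin 4)} (hv : IsInterleaving v₁ v₂ v)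
    (hxv : x ++ v ++ z = wordW n) (h0 : (0 : Fin 4) ∈ v) (hf : (2 : Fin 4) ∈ v₁)
    (hc : ∀ u, IsInterleaving v₁ v₂ u → x ++ u ++ z ∈ L) : v₂ = [] := by
  have hperm := hv.perm'
  obtain ⟨-, hw2, hwl⟩ := wordW_count n
  have hlen : ∀ u, IsInterleaving v₁ v₂ u → 2 < (x ++ u ++ z).length := by
    intro u hu
    have h1 := (hu.perm'.trans hperm.symm).length_eq
    have h2 := congrArg List.length hxv
    simp only [List.length_append] at h2 ⊢
    omega
  have hf2 : (2 : Fin 4) ∉ v₂ := by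
    intro h
    have h3 := congrArg (List.count 2) hxv
    have h4 := hperm.count_eq 2
    have h5 := List.count_pos_iff.mpr h
    have h6 := List.count_pos_iff.mpr hf
    simp only [List.count_append] at h3 h4
    omega
  obtain ⟨y, y', rfl⟩ := List.append_of_mem hf
  have key : ∀ p q, v₂ = p ++ q → p.count 0 + (x ++ y).count 0 = p.count 1 + (x ++ y).count 1 := by
    rintro p q rfl
    have hi := IsInterleaving.insert' p q (y ++ 2 :: y')
    have h1 := hc _ hi
    have h2 := hlen _ hi
    have e : x ++ (p ++ (y ++ 2 :: y') ++ q) ++ z = (x ++ p ++ y) ++ 2 :: (y' ++ q ++ z) := by simp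
    rw [e] at h1 h2
    have h3 := hL.h2 _ _ h1 h2
    simp only [List.count_append] at h3 ⊢
    omega
  have k0 : (0 : Fin 4) ∉ v₂ := by
    intro h
    obtain ⟨p, q, rfl⟩ := List.append_of_mem h
    have e1 := key p _ rfl
    have e2 := key (p ++ [0]) q (by simp)
    simp [List.count_append] at e1 e2
    omega
  have k1 : (1 : Fin 4) ∉ v₂ := by
    intro h
    obtain ⟨p, q, rfl⟩ := List.append_of_mem h
    have e1 := key p _ rfl
    have e2 := key (p ++ [1]) q (by simp)
    simp [List.count_append] at e1 e2
    omega
  have k3 : (3 : Fin 4) ∉ v₂ := by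
    intro h
    obtain ⟨p, q, rfl⟩ := List.append_of_mem h
    have hi := IsInterleaving.insert' (p ++ 3 :: q) [] (y ++ 2 :: y')
    rw [List.append_nil] at hi
    have h1 := hc _ hi
    have h2 := hlen _ hi
    have e : x ++ (p ++ 3 :: q ++ (y ++ 2 :: y') ++ []) ++ z =
      (x ++ p) ++ 3 :: (q ++ (y ++ 2 :: y') ++ z) := by simp
    rw [e] at h1 h2
    have h3 := hL.h3 _ _ h1 h2
    have h4 := (hperm.mem_iff).mp h0
    simp only [List.mem_append] at h3 h4 k0
    tauto
  rw [List.eq_nil_iff_forall_not_mem]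
  intro a ha
  have hall : ∀ a : Fin 4, a = 0 ∨ a = 1 ∨ a = 2 ∨ a = 3 := by decide
  rcases hall a with rfl | rfl | rfl | rfl <;> contradiction

theorem bound_exists {T : Type} (G : GSys T (Fin 4)) {L : Set (List (Fin 4))} (hL : LangProps L)
    {F : Set T} (hF : F.Finite) :
    ∃ D : ℕ, ∀ t ∈ F, ∀ x z, (∀ u, GDer G t u → x ++ u ++ z ∈ L) → ∀ u, GDer G t u →
      ((u.count 0 : ℤ) - u.count 3).natAbs ≤ D ∧ ((u.count 0 : ℤ) - u.count 1).natAbs ≤ D := by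
  have h : ∀ t, ∃ D : ℕ, (∃ x z, (∀ u, GDer G t u → x ++ u ++ z ∈ L)) → ∀ u, GDer G t u →
      ((u.count 0 : ℤ) - u.count 3).natAbs ≤ D ∧ ((u.count 0 : ℤ) - u.count 1).natAbs ≤ D := by
    intro t
    by_cases hx : ∃ x z, (∀ u, GDer G t u → x ++ u ++ z ∈ L)
    · obtain ⟨x, z, hx⟩ := hx
      refine ⟨2 + x.length + z.length, fun _ u hu => ?_⟩
      have h1 := hL.h1 _ (hx u hu)
      simp only [List.count_append] at h1
      have := List.count_le_length (a := (0 : Fin 4)) (l := x)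
      have := List.count_le_length (a := (1 : Fin 4)) (l := x)
      have := List.count_le_length (a := (3 : Fin 4)) (l := x)
      have := List.count_le_length (a := (0 : Fin 4)) (l := z)
      have := List.count_le_length (a := (1 : Fin 4)) (l := z)
      have := List.count_le_length (a := (3 : Fin 4)) (l := z)
      omega
    · exact ⟨0, fun h => absurd h hx⟩
  choose D hD using h
  refine ⟨hF.toFinset.sup D, fun t ht x z hx u hu => ?_⟩
  have h1 := hD t ⟨x, z, hx⟩ u hu
  have h2 : D t ≤ hF.toFinset.sup D := Finset.le_sup (by simpa using ht)
  exact ⟨h1.1.trans h2, h1.2.trans h2⟩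

theorem core {T : Type} (G : GSys T (Fin 4)) {L : Set (List (Fin 4))} (hL : LangProps L)
    {F : Set T} (hF : F.Finite) (hcl : G.Closed F) (s : T) (hs : s ∈ F)
    (hsL : ∀ w, GDer G s w ↔ w ∈ L) : False := by
  obtain ⟨D, hD⟩ := bound_exists G hL hF
  set n := 2 * D + 5 with hn
  obtain ⟨hw1, hw2, hwl⟩ := wordW_count n
  have hsort := wordW_sorted n
  suffices H : ∀ t v, GDer G t v → t ∈ F → ∀ x z, (∀ u, GDer G t u → x ++ u ++ z ∈ L) →
      x ++ v ++ z = wordW n → (2 : Fin 4) ∈ v → (0 : Fin 4) ∈ v → False by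
    refine H s (wordW n) ((hsL _).mpr (hL.hw n (by omega))) hs [] [] ?_ (by simp) ?_ ?_
    · intro u hu
      simpa using (hsL u).mp hu
    · simp [wordW]
    · simp [wordW, hn]
  have cnt : ∀ t v, GDer G t v → t ∈ F → ∀ x z, (∀ u, GDer G t u → x ++ u ++ z ∈ L) →
      x ++ v ++ z = wordW n → (2 : Fin 4) ∈ v → (0 : Fin 4) ∈ v → n ≤ v.count 0 + D := by
    intro t v hv ht x z hx e h2 h0
    have hb := hD t ht x z hx v hv
    rw [← e, List.pairwise_append, List.pairwise_append] at hsort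
    obtain ⟨⟨-, -, s1⟩, -, s2⟩ := hsort
    have c1 : x.count 1 = 0 := by
      rw [List.count_eq_zero]
      intro h
      exact absurd (s1 _ h _ h0) (by decide)
    have c2 : z.count 1 = 0 := by
      rw [List.count_eq_zero]
      intro h
      exact absurd (s2 2 (by simp [h2]) _ h) (by decide)
    rw [← e, List.count_append, List.count_append] at hw1
    omega
  intro t v hv
  induction hv with
  | eps _ => intro _ x z _ _ h; simp at h
  | unit r _ ih =>
    intro ht x z hx
    exact ih (hcl.cU _ _ ht r) x z (fun u hu => hx u (.unit r hu))
  | @pre t t' a w r hd ih =>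
    intro ht x z hx e h2 h0
    have hc := cnt _ _ (.pre r hd) ht x z hx e h2 h0
    have h0' : (0 : Fin 4) ∈ w := by
      by_contra h
      have := List.count_eq_zero.mpr h
      rw [List.count_cons] at hc
      split at hc <;> omega
    have h2' : (2 : Fin 4) ∈ w := by
      rcases List.mem_cons.mp h2 with rfl | h
      · exfalso
        rw [← e, List.pairwise_append, List.pairwise_append, List.pairwise_cons] at hsort
        exact absurd (hsort.1.2.1.1 _ h0') (by decide)
      · exact h
    refine ih (hcl.cA _ _ _ ht r) (x ++ [a]) z (fun u hu => ?_) (by simpa using e) h2' h0'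
    simpa using hx _ (.pre r hu)
  | @seq t t₁ t₂ v₁ v₂ r hd₁ hd₂ ih₁ ih₂ =>
    intro ht x z hx e h2 h0
    have hc := cnt _ _ (.seq r hd₁ hd₂) ht x z hx e h2 h0
    have hF12 := hcl.cS _ _ _ ht r
    have hx1 : ∀ u, GDer G t₁ u → x ++ u ++ (v₂ ++ z) ∈ L := fun u hu => by
      simpa using hx _ (.seq r hu hd₂)
    have hx2 : ∀ u, GDer G t₂ u → (x ++ v₁) ++ u ++ z ∈ L := fun u hu => by
      simpa using hx _ (.seq r hd₁ hu)
    have hs' := hsort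
    rw [← e, List.pairwise_append, List.pairwise_append, List.pairwise_append] at hs'
    have hs12 := hs'.1.2.1.2.2
    by_cases f1 : (2 : Fin 4) ∈ v₁
    · refine ih₁ hF12.1 x (v₂ ++ z) hx1 (by simpa using e) f1 ?_
      rcases List.mem_append.mp h0 with h | h
      · exact h
      · exact absurd (hs12 _ f1 _ h) (by decide)
    · have f2 : (2 : Fin 4) ∈ v₂ := (List.mem_append.mp h2).resolve_left f1
      by_cases a2 : (0 : Fin 4) ∈ v₂
      · exact ih₂ hF12.2 (x ++ v₁) z hx2 (by simpa using e) f2 a2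
      · have hb := hD _ hF12.1 _ _ hx1 _ hd₁
        have c3 : v₁.count 3 = 0 := by
          rw [List.count_eq_zero]
          intro h
          exact absurd (hs12 _ h _ f2) (by decide)
        have := List.count_eq_zero.mpr a2
        rw [List.count_append] at hc
        omega
  | @par t t₁ t₂ v₁ v₂ v r hd₁ hd₂ hi ih₁ ih₂ =>
    intro ht x z hx e h2 h0
    have hF12 := hcl.cP _ _ _ ht r
    rcases List.mem_append.mp (hi.perm'.mem_iff.mp h2) with f | f
    · have h := par_empty hL (by omega) hi e h0 f (fun u hu => hx _ (.par r hd₁ hd₂ hu))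
      subst h
      obtain rfl := hi.eq_of_nil_right
      exact ih₁ hF12.1 x z (fun u hu => hx _ (.par r hu hd₂ (IsInterleaving.nil_right' u))) e h2 h0
    · have h := par_empty hL (by omega) hi.swap' e h0 f
        (fun u hu => hx _ (.par r hd₁ hd₂ hu.swap'))
      subst h
      obtain rfl := hi.swap'.eq_of_nil_right
      exact ih₂ hF12.2 x z (fun u hu => hx _ (.par r hd₁ hu (IsInterleaving.nil_left' u))) e h2 h0

/-! PA-grammars as generalized systems. -/

theorem IsInterleaving.assoc' {α : Type} {u v w x y : List α} (h : IsInterleaving w x y)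
    (h' : IsInterleaving u v w) : ∃ k, IsInterleaving v x k ∧ IsInterleaving u k y := by
  induction h generalizing u v with
  | nil => cases h'; exact ⟨[], .nil, .nil⟩
  | left h ih =>
    cases h' with
    | left h' => obtain ⟨k, h1, h2⟩ := ih h'; exact ⟨k, h1, .left h2⟩
    | right h' => obtain ⟨k, h1, h2⟩ := ih h'; exact ⟨_, .left h1, .right h2⟩
  | right h ih => obtain ⟨k, h1, h2⟩ := ih h'; exact ⟨_, .right h1, .right h2⟩

theorem IsInterleaving.assoc'' {α : Type} {u v k x y : List α} (h : IsInterleaving u k y)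
    (h' : IsInterleaving v x k) : ∃ w, IsInterleaving u v w ∧ IsInterleaving w x y := by
  obtain ⟨w, h1, h2⟩ := h.swap'.assoc' h'.swap'
  exact ⟨w, h1.swap', h2.swap'⟩

def paSys {V α : Type} (P : Set (V × α × PATerm V)) : GSys (PATerm V) α where
  rE t := t = PATerm.eps
  rU _ _ := False
  rA t a t' := ∃ X, t = PATerm.var X ∧ (X, a, t') ∈ P
  rS t t₁ t₂ := t = PATerm.seq t₁ t₂
  rP t t₁ t₂ := t = PATerm.par t₁ t₂

section
variable {V α : Type} {P : Set (V × α × PATerm V)}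

theorem paDer_eps {w : List α} : GDer (paSys P) PATerm.eps w ↔ w = [] := by
  constructor
  · intro h
    cases h with
    | eps _ => rfl
    | unit r _ => exact r.elim
    | pre r _ => obtain ⟨_, h, _⟩ := r; cases h
    | seq r _ _ => cases r
    | par r _ _ _ => cases r
  · rintro rfl; exact .eps rfl

theorem paDer_seq {t u : PATerm V} {w : List α} : GDer (paSys P) (t.seq u) w ↔
    ∃ x y, w = x ++ y ∧ GDer (paSys P) t x ∧ GDer (paSys P) u y := by
  constructor
  · intro h
    cases h with
    | eps r => cases r
    | unit r _ => exact r.elim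
    | pre r _ => obtain ⟨_, h, _⟩ := r; cases h
    | seq r h1 h2 => cases r; exact ⟨_, _, rfl, h1, h2⟩
    | par r _ _ _ => cases r
  · rintro ⟨x, y, rfl, h1, h2⟩; exact .seq rfl h1 h2

theorem paDer_par {t u : PATerm V} {w : List α} : GDer (paSys P) (t.par u) w ↔
    ∃ x y, IsInterleaving x y w ∧ GDer (paSys P) t x ∧ GDer (paSys P) u y := by
  constructor
  · intro h
    cases h with
    | eps r => cases r
    | unit r _ => exact r.elim
    | pre r _ => obtain ⟨_, h, _⟩ := r; cases h
    | seq r h1 h2 => cases r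
    | par r h1 h2 h3 => cases r; exact ⟨_, _, h3, h1, h2⟩
  · rintro ⟨x, y, h, h1, h2⟩; exact .par rfl h1 h2 h

theorem paDer_eqv {t t' : PATerm V} (h : PAEq t t') :
    ∀ w : List α, GDer (paSys P) t w ↔ GDer (paSys P) t' w := by
  induction h with
  | refl t => exact fun _ => Iff.rfl
  | symm _ ih => exact fun w => (ih w).symm
  | trans _ _ ih1 ih2 => exact fun w => (ih1 w).trans (ih2 w)
  | seq_assoc t u v =>
    intro w
    constructor
    · intro h
      obtain ⟨x, y, rfl, h1, h2⟩ := paDer_seq.mp h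
      obtain ⟨x1, x2, rfl, h3, h4⟩ := paDer_seq.mp h1
      exact paDer_seq.mpr ⟨x1, x2 ++ y, by simp, h3, paDer_seq.mpr ⟨_, _, rfl, h4, h2⟩⟩
    · intro h
      obtain ⟨x, y, rfl, h1, h2⟩ := paDer_seq.mp h
      obtain ⟨x1, x2, rfl, h3, h4⟩ := paDer_seq.mp h2
      exact paDer_seq.mpr ⟨x ++ x1, x2, by simp, paDer_seq.mpr ⟨_, _, rfl, h1, h3⟩, h4⟩
  | par_assoc t u v =>
    intro w
    constructor
    · intro h
      obtain ⟨x, y, hi, h1, h2⟩ := paDer_par.mp h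
      obtain ⟨x1, x2, hj, h3, h4⟩ := paDer_par.mp h1
      obtain ⟨k, k1, k2⟩ := hi.assoc' hj
      exact paDer_par.mpr ⟨x1, k, k2, h3, paDer_par.mpr ⟨_, _, k1, h4, h2⟩⟩
    · intro h
      obtain ⟨x, y, hi, h1, h2⟩ := paDer_par.mp h
      obtain ⟨x1, x2, hj, h3, h4⟩ := paDer_par.mp h2
      obtain ⟨k, k1, k2⟩ := hi.assoc'' hj
      exact paDer_par.mpr ⟨k, x2, k2, paDer_par.mpr ⟨_, _, k1, h1, h3⟩, h4⟩
  | par_comm t u =>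
    intro w
    constructor
    · intro h
      obtain ⟨x, y, hi, h1, h2⟩ := paDer_par.mp h
      exact paDer_par.mpr ⟨y, x, hi.swap', h2, h1⟩
    · intro h
      obtain ⟨x, y, hi, h1, h2⟩ := paDer_par.mp h
      exact paDer_par.mpr ⟨y, x, hi.swap', h2, h1⟩
  | seq_eps_left t =>
    intro w
    constructor
    · intro h
      obtain ⟨x, y, rfl, h1, h2⟩ := paDer_seq.mp h
      obtain rfl := paDer_eps.mp h1
      simpa using h2
    · intro h
      exact paDer_seq.mpr ⟨[], w, rfl, paDer_eps.mpr rfl, h⟩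
  | seq_eps_right t =>
    intro w
    constructor
    · intro h
      obtain ⟨x, y, rfl, h1, h2⟩ := paDer_seq.mp h
      obtain rfl := paDer_eps.mp h2
      simpa using h1
    · intro h
      exact paDer_seq.mpr ⟨w, [], by simp, h, paDer_eps.mpr rfl⟩
  | par_eps t =>
    intro w
    constructor
    · intro h
      obtain ⟨x, y, hi, h1, h2⟩ := paDer_par.mp h
      obtain rfl := paDer_eps.mp h2
      rwa [hi.eq_of_nil_right]
    · intro h
      exact paDer_par.mpr ⟨w, [], IsInterleaving.nil_right' w, h, paDer_eps.mpr rfl⟩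
  | seq_congr _ _ ih1 ih2 =>
    intro w
    simp only [paDer_seq, ih1, ih2]
  | par_congr _ _ ih1 ih2 =>
    intro w
    simp only [paDer_par, ih1, ih2]

theorem paDer_step {t t' : PATerm V} {a : α} (h : PAStep P t a t') :
    ∀ w, GDer (paSys P) t' w → GDer (paSys P) t (a :: w) := by
  induction h with
  | prod h => exact fun w hw => .pre ⟨_, rfl, h⟩ hw
  | seq_left _ ih =>
    intro w hw
    obtain ⟨x, y, rfl, h1, h2⟩ := paDer_seq.mp hw
    exact paDer_seq.mpr ⟨_, _, rfl, ih _ h1, h2⟩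
  | par_left _ ih =>
    intro w hw
    obtain ⟨x, y, hi, h1, h2⟩ := paDer_par.mp hw
    exact paDer_par.mpr ⟨_, _, .left hi, ih _ h1, h2⟩
  | par_right _ ih =>
    intro w hw
    obtain ⟨x, y, hi, h1, h2⟩ := paDer_par.mp hw
    exact paDer_par.mpr ⟨_, _, .right hi, h1, ih _ h2⟩

theorem paDer_of_gen {t : PATerm V} {w : List α} (h : PAGen P t w) : GDer (paSys P) t w := by
  induction h with
  | done => exact .eps rfl
  | eqv e _ ih => exact (paDer_eqv e _).mpr ih
  | step s _ ih => exact paDer_step s _ ih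

theorem PAGen.nil_inv {t : PATerm V} {w : List α} (h : PAGen P t w) (hw : w = []) :
    PAEq t PATerm.eps := by
  induction h with
  | done => exact .refl _
  | eqv e _ ih => exact .trans e (ih hw)
  | step s _ ih => cases hw

theorem PAGen.cons_inv {t : PATerm V} {a : α} {w w' : List α} (h : PAGen P t w')
    (hw : w' = a :: w) : ∃ t₁ t₂, PAEq t t₁ ∧ PAStep P t₁ a t₂ ∧ PAGen P t₂ w := by
  induction h with
  | done => cases hw
  | eqv e _ ih =>
    obtain ⟨t₁, t₂, h1, h2, h3⟩ := ih hw
    exact ⟨t₁, t₂, .trans e h1, h2, h3⟩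
  | step s h ih => cases hw; exact ⟨_, _, .refl _, s, h⟩

theorem PAGen.seq' {t u : PATerm V} {x y : List α} (h1 : PAGen P t x) (h2 : PAGen P u y) :
    PAGen P (t.seq u) (x ++ y) := by
  induction h1 with
  | done => exact .eqv (.seq_eps_left _) h2
  | eqv e _ ih => exact .eqv (.seq_congr e (.refl _)) ih
  | step s _ ih => exact .step (.seq_left s) ih

theorem PAGen.par' {t u : PATerm V} {x y w : List α} (hi : IsInterleaving x y w)
    (h1 : PAGen P t x) (h2 : PAGen P u y) : PAGen P (t.par u) w := by
  induction hi generalizing t u with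
  | nil =>
    exact .eqv (.trans (.par_congr (h1.nil_inv rfl) (h2.nil_inv rfl)) (.par_eps _)) .done
  | left _ ih =>
    obtain ⟨t₁, t₂, k1, k2, k3⟩ := h1.cons_inv rfl
    exact .eqv (.par_congr k1 (.refl _)) (.step (.par_left k2) (ih k3 h2))
  | right _ ih =>
    obtain ⟨t₁, t₂, k1, k2, k3⟩ := h2.cons_inv rfl
    exact .eqv (.par_congr (.refl _) k1) (.step (.par_right k2) (ih h1 k3))

theorem paGen_of_der {t : PATerm V} {w : List α} (h : GDer (paSys P) t w) : PAGen P t w := by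
  induction h with
  | eps r => cases r; exact .done
  | unit r _ _ => exact r.elim
  | pre r _ ih => obtain ⟨X, rfl, h⟩ := r; exact .step (.prod h) ih
  | seq r _ _ ih1 ih2 => cases r; exact ih1.seq' ih2
  | par r _ _ hi ih1 ih2 => cases r; exact PAGen.par' hi ih1 ih2

end

def paSub {V : Type} : PATerm V → Set (PATerm V)
  | .eps => {.eps}
  | .var X => {.var X}
  | .seq t u => {.seq t u} ∪ (paSub t ∪ paSub u)
  | .par t u => {.par t u} ∪ (paSub t ∪ paSub u)

theorem paSub_finite {V : Type} (t : PATerm V) : (paSub t).Finite := by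
  induction t with
  | eps => exact Set.finite_singleton _
  | var X => exact Set.finite_singleton _
  | seq t u h1 h2 => exact (Set.finite_singleton _).union (h1.union h2)
  | par t u h1 h2 => exact (Set.finite_singleton _).union (h1.union h2)

theorem paSub_self {V : Type} (t : PATerm V) : t ∈ paSub t := by
  cases t <;> simp [paSub]

theorem paSub_seq {V : Type} {s t u : PATerm V} (h : t.seq u ∈ paSub s) :
    t ∈ paSub s ∧ u ∈ paSub s := by
  induction s with
  | eps => cases h
  | var X => cases h
  | seq t' u' h1 h2 =>
    rcases h with h | h | h
    · cases h
      exact ⟨Or.inr (Or.inl (paSub_self _)), Or.inr (Or.inr (paSub_self _))⟩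
    · exact ⟨Or.inr (Or.inl (h1 h).1), Or.inr (Or.inl (h1 h).2)⟩
    · exact ⟨Or.inr (Or.inr (h2 h).1), Or.inr (Or.inr (h2 h).2)⟩
  | par t' u' h1 h2 =>
    rcases h with h | h | h
    · cases h
    · exact ⟨Or.inr (Or.inl (h1 h).1), Or.inr (Or.inl (h1 h).2)⟩
    · exact ⟨Or.inr (Or.inr (h2 h).1), Or.inr (Or.inr (h2 h).2)⟩

theorem paSub_par {V : Type} {s t u : PATerm V} (h : t.par u ∈ paSub s) :
    t ∈ paSub s ∧ u ∈ paSub s := by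
  induction s with
  | eps => cases h
  | var X => cases h
  | par t' u' h1 h2 =>
    rcases h with h | h | h
    · cases h
      exact ⟨Or.inr (Or.inl (paSub_self _)), Or.inr (Or.inr (paSub_self _))⟩
    · exact ⟨Or.inr (Or.inl (h1 h).1), Or.inr (Or.inl (h1 h).2)⟩
    · exact ⟨Or.inr (Or.inr (h2 h).1), Or.inr (Or.inr (h2 h).2)⟩
  | seq t' u' h1 h2 =>
    rcases h with h | h | h
    · cases h
    · exact ⟨Or.inr (Or.inl (h1 h).1), Or.inr (Or.inl (h1 h).2)⟩
    · exact ⟨Or.inr (Or.inr (h2 h).1), Or.inr (Or.inr (h2 h).2)⟩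

theorem not_shuffle {L : Set (List (Fin 4))} (hL : LangProps L) : ¬ IsShuffleCFL L := by
  rintro ⟨G, rfl⟩
  let F : Set (PATerm G.V) := paSub (.var G.start) ∪ ⋃ p ∈ G.prods, paSub p.2.2
  have hmem : ∀ t, t ∈ F ↔ t ∈ paSub (.var G.start) ∨ ∃ p ∈ G.prods, t ∈ paSub p.2.2 := by
    intro t; simp [F]
  refine core (paSys G.prods) hL (F := F) ?_ ⟨?_, ?_, ?_, ?_⟩ (.var G.start) ?_ ?_
  · exact (paSub_finite _).union (G.finP.biUnion fun p _ => paSub_finite _)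
  · intro _ _ _ h; exact h.elim
  · rintro t a t' - ⟨X, -, h⟩
    exact (hmem _).mpr (Or.inr ⟨_, h, paSub_self _⟩)
  · rintro _ t u h rfl
    rcases (hmem _).mp h with h | ⟨p, hp, h⟩
    · exact ⟨(hmem _).mpr (Or.inl (paSub_seq h).1), (hmem _).mpr (Or.inl (paSub_seq h).2)⟩
    · exact ⟨(hmem _).mpr (Or.inr ⟨p, hp, (paSub_seq h).1⟩),
        (hmem _).mpr (Or.inr ⟨p, hp, (paSub_seq h).2⟩)⟩
  · rintro _ t u h rfl
    rcases (hmem _).mp h with h | ⟨p, hp, h⟩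
    · exact ⟨(hmem _).mpr (Or.inl (paSub_par h).1), (hmem _).mpr (Or.inl (paSub_par h).2)⟩
    · exact ⟨(hmem _).mpr (Or.inr ⟨p, hp, (paSub_par h).1⟩),
        (hmem _).mpr (Or.inr ⟨p, hp, (paSub_par h).2⟩)⟩
  · exact Or.inl (paSub_self _)
  · exact fun w => ⟨paGen_of_der, paDer_of_gen⟩

/-! Context-free grammars as generalized systems. -/

def cfSys {α : Type} (g : ContextFreeGrammar α) : GSys (List (Symbol α g.NT)) α where
  rE l := l = []
  rU l l' := ∃ r ∈ g.rules, l = [Symbol.nonterminal r.input] ∧ l' = r.output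
  rA l a l' := l = [Symbol.terminal a] ∧ l' = []
  rS l l₁ l₂ := l = l₁ ++ l₂
  rP _ _ _ := False

section
variable {α : Type} {g : ContextFreeGrammar α}

theorem cfDer_sound {l : List (Symbol α g.NT)} {w : List α} (h : GDer (cfSys g) l w) :
    g.Derives l (w.map Symbol.terminal) := by
  induction h with
  | eps r => cases r; exact Relation.ReflTransGen.refl
  | unit r _ ih =>
    obtain ⟨r, hr, rfl, rfl⟩ := r
    exact ContextFreeGrammar.Produces.trans_derives ⟨r, hr, .input_output⟩ ih
  | pre r _ ih =>
    obtain ⟨rfl, rfl⟩ := r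
    exact ih.append_left [_]
  | seq r _ _ ih1 ih2 =>
    cases r
    rw [List.map_append]
    exact (ih1.append_right _).trans (ih2.append_left _)
  | par r _ _ _ _ _ => exact r.elim

theorem cfDer_append {l : List (Symbol α g.NT)} {w : List α} (h : GDer (cfSys g) l w) :
    ∀ l₁ l₂, l = l₁ ++ l₂ → ∃ u v, w = u ++ v ∧ GDer (cfSys g) l₁ u ∧ GDer (cfSys g) l₂ v := by
  have hnil : GDer (cfSys g) [] [] := .eps rfl
  have single : ∀ (s : Symbol α g.NT) (w : List α), GDer (cfSys g) [s] w → ∀ l₁ l₂,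
      [s] = l₁ ++ l₂ → ∃ u v, w = u ++ v ∧ GDer (cfSys g) l₁ u ∧ GDer (cfSys g) l₂ v := by
    intro s w h l₁ l₂ e
    cases l₁ with
    | nil => simp only [List.nil_append] at e; subst e; exact ⟨[], w, rfl, hnil, h⟩
    | cons c l₁ =>
      simp only [List.cons_append, List.cons.injEq] at e
      obtain ⟨rfl, e⟩ := e
      obtain ⟨rfl, rfl⟩ := List.append_eq_nil_iff.mp e.symm
      exact ⟨w, [], by simp, h, hnil⟩
  induction h with
  | eps r =>
    intro l₁ l₂ e
    cases r
    obtain ⟨rfl, rfl⟩ := List.append_eq_nil_iff.mp e.symm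
    exact ⟨[], [], rfl, hnil, hnil⟩
  | unit r h ih =>
    obtain ⟨r, hr, rfl, rfl⟩ := r
    exact single _ _ (.unit ⟨r, hr, rfl, rfl⟩ h)
  | pre r h ih =>
    obtain ⟨rfl, rfl⟩ := r
    exact single _ _ (.pre ⟨rfl, rfl⟩ h)
  | seq r h1 h2 ih1 ih2 =>
    intro l₁ l₂ e
    cases r
    rcases List.append_eq_append_iff.mp e with ⟨k, rfl, rfl⟩ | ⟨k, rfl, rfl⟩
    · obtain ⟨u, v, rfl, k1, k2⟩ := ih2 _ _ rfl
      exact ⟨_ ++ u, v, by simp, .seq rfl h1 k1, k2⟩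
    · obtain ⟨u, v, rfl, k1, k2⟩ := ih1 _ _ rfl
      exact ⟨u, v ++ _, by simp, k1, .seq rfl k2 h2⟩
  | par r _ _ _ _ _ => exact r.elim

theorem cfDer_terminals (w : List α) : GDer (cfSys g) (w.map Symbol.terminal) w := by
  induction w with
  | nil => exact .eps rfl
  | cons a w ih =>
    exact GDer.seq (u := [a]) (v := w) (t₁ := [Symbol.terminal a]) rfl
      (.pre ⟨rfl, rfl⟩ (.eps rfl)) ih

theorem cfDer_complete {l : List (Symbol α g.NT)} {w : List α}
    (h : g.Derives l (w.map Symbol.terminal)) : GDer (cfSys g) l w := by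
  induction h using Relation.ReflTransGen.head_induction_on with
  | refl => exact cfDer_terminals w
  | head h _ ih =>
    obtain ⟨r, hr, h⟩ := h
    obtain ⟨p, q, rfl, rfl⟩ := h.exists_parts
    obtain ⟨u, v, rfl, h1, h2⟩ := cfDer_append ih _ _ rfl
    obtain ⟨u, u', rfl, h3, h4⟩ := cfDer_append h1 _ _ rfl
    exact .seq rfl (.seq rfl h3 (.unit ⟨r, hr, rfl, rfl⟩ h4)) h2

end

theorem not_cf {L : Set (List (Fin 4))} (hL : LangProps L) {L₀ : Language (Fin 4)}
    (h : L₀.IsContextFree) (e : ∀ w, w ∈ L₀ ↔ w ∈ L) : False := by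
  obtain ⟨g, rfl⟩ := h
  let F : Set (List (Symbol (Fin 4) g.NT)) :=
    {l | l.Sublist [Symbol.nonterminal g.initial]} ∪ ⋃ r ∈ g.rules, {l | l.Sublist r.output}
  have hfin : ∀ k : List (Symbol (Fin 4) g.NT), Set.Finite {l : List (Symbol (Fin 4) g.NT) | l.Sublist k} := by
    intro k
    refine (List.finite_toSet k.sublists).subset ?_
    intro l hl
    exact List.mem_sublists.mpr hl
  have hmem : ∀ t, t ∈ F ↔ t.Sublist [Symbol.nonterminal g.initial] ∨
      ∃ r ∈ g.rules, t.Sublist r.output := by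
    intro t; simp [F]
  have hdown : ∀ t t', t ∈ F → t'.Sublist t → t' ∈ F := by
    intro t t' h h'
    rcases (hmem _).mp h with h | ⟨r, hr, h⟩
    · exact (hmem _).mpr (Or.inl (h'.trans h))
    · exact (hmem _).mpr (Or.inr ⟨r, hr, h'.trans h⟩)
  refine core (cfSys g) hL (F := F) ?_ ⟨?_, ?_, ?_, ?_⟩ [Symbol.nonterminal g.initial] ?_ ?_
  · exact (hfin _).union (g.rules.finite_toSet.biUnion fun r _ => hfin _)
  · rintro t t' - ⟨r, hr, -, rfl⟩
    exact (hmem _).mpr (Or.inr ⟨r, hr, .refl _⟩)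
  · rintro t a t' h ⟨-, rfl⟩
    exact hdown _ _ h (List.nil_sublist _)
  · rintro _ t₁ t₂ h rfl
    exact ⟨hdown _ _ h (List.sublist_append_left _ _), hdown _ _ h (List.sublist_append_right _ _)⟩
  · intro _ _ _ _ h; exact h.elim
  · exact (hmem _).mpr (Or.inl (.refl _))
  · intro w
    rw [← e w]
    exact ⟨cfDer_sound, cfDer_complete⟩

theorem not_trace {L : Set (List (Fin 4))} (hL : LangProps L)
    (hJ : ∀ p q : Fin 4, p < q → [p, q] ∈ L ∧ [q, p] ∉ L) : ¬ IsTraceCFL L := by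
  rintro ⟨J, hsym, hirr, L₀, hcf, hcl⟩
  have cl : ∀ w w', w ∈ L → AdjSwap J w w' → w' ∈ L := by
    intro w w' hw h
    rw [← hcl] at hw ⊢
    obtain ⟨v, hv, hvw⟩ := hw
    exact ⟨v, hv, hvw.tail h⟩
  have key : ∀ p q, p < q → ¬ J p q := by
    intro p q hpq h
    exact (hJ p q hpq).2 (cl _ _ (hJ p q hpq).1 (AdjSwap.swap [] [] h))
  have hno : ∀ p q, ¬ J p q := by
    intro p q h
    rcases lt_trichotomy p q with h' | rfl | h'
    · exact key _ _ h' h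
    · exact hirr _ h
    · exact key _ _ h' (hsym _ _ h)
  refine not_cf hL hcf fun w => ?_
  rw [← hcl]
  constructor
  · intro h; exact ⟨w, h, .refl⟩
  · rintro ⟨v, hv, h⟩
    cases h with
    | refl => exact hv
    | tail _ h => cases h with | swap x y h => exact absurd h (hno _ _)

/-! The language. Nonterminals: `0` start, `1` C, `2` F, `3` B, `4` S. -/

def exProds : List (Fin 5 × Fin 4 × List (Fin 5)) :=
  [(0, 0, [4, 3, 1, 2]), (4, 0, [4, 3, 1]), (4, 0, [3, 1]), (1, 1, []), (2, 2, []), (3, 3, []),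
   (0, 0, [1]), (0, 0, [2]), (0, 0, [3]), (0, 1, [2]), (0, 1, [3]), (0, 2, [3])]

def exCls (x : Fin 5) : Bool := x == 1 || x == 2

def exG : PCGrammar (Fin 4) where
  V := Fin 5
  finV := inferInstance
  start := (0 : Fin 5)
  prods := {p | p ∈ exProds}
  finP := List.finite_toSet exProds
  indep := fun X Y => exCls X ≠ exCls Y
  indep_symm := fun h => Ne.symm h
  indep_irrefl := fun _ h => h rfl

inductive MyD : List (Fin 5) → List (Fin 4) → Prop
  | nil : MyD [] []
  | prod {X : Fin 5} {a : Fin 4} {γ β : List (Fin 5)} {w : List (Fin 4)} :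
      (X, a, γ) ∈ exProds → MyD (γ ++ β) w → MyD (X :: β) (a :: w)
  | swap {η β : List (Fin 5)} {X Y : Fin 5} {w : List (Fin 4)} :
      exCls X ≠ exCls Y → MyD (η ++ Y :: X :: β) w → MyD (η ++ X :: Y :: β) w

theorem myD_of {γ : List exG.V} {w : List (Fin 4)} (h : PCDerives exG γ w) : MyD γ w := by
  induction h with
  | nil => exact .nil
  | prod h _ ih => exact .prod h ih
  | swap h _ ih => exact .swap h ih

theorem of_myD {γ : List (Fin 5)} {w : List (Fin 4)} (h : MyD γ w) : PCDerives exG γ w := by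
  induction h with
  | nil => exact .nil
  | prod h _ ih => exact PCDerives.prod (G := exG) h ih
  | swap h _ ih => exact PCDerives.swap (G := exG) h ih

/-- Case analysis on productions not from the start symbol. -/
theorem exProds_cases {X : Fin 5} {a : Fin 4} {γ : List (Fin 5)} (h : (X, a, γ) ∈ exProds)
    (h0 : X ≠ 0) : (X = 4 ∧ a = 0 ∧ (γ = [4, 3, 1] ∨ γ = [3, 1])) ∨ (X = 1 ∧ a = 1 ∧ γ = []) ∨
      (X = 2 ∧ a = 2 ∧ γ = []) ∨ (X = 3 ∧ a = 3 ∧ γ = []) := by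
  simp only [exProds, List.mem_cons, Prod.mk.injEq, List.not_mem_nil] at h
  tauto

theorem swap_perm {V : Type} (η β : List V) (X Y : V) :
    (η ++ X :: Y :: β).Perm (η ++ Y :: X :: β) :=
  List.Perm.append_left _ (List.Perm.swap _ _ _)

theorem inv1 {γ : List (Fin 5)} {w : List (Fin 4)} (h : MyD γ w) : 0 ∉ γ →
    w.count 3 = w.count 0 + γ.count 3 ∧ w.count 1 = w.count 0 + γ.count 1 ∧
    w.count 2 = γ.count 2 ∧ (4 ∉ γ → w.count 0 = 0) := by
  induction h with
  | nil => simp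
  | prod h _ ih =>
    intro h0
    rw [List.mem_cons, not_or] at h0
    rcases exProds_cases h (Ne.symm h0.1) with ⟨rfl, rfl, rfl | rfl⟩ | ⟨rfl, rfl, rfl⟩ |
      ⟨rfl, rfl, rfl⟩ | ⟨rfl, rfl, rfl⟩ <;>
    · have := ih (by simp [h0.2])
      simp at this ⊢
      grind
  | @swap η β X Y w h _ ih =>
    intro h0
    have hp := fun a => (swap_perm η β X Y).count_eq a
    rw [(swap_perm _ _ _ _).mem_iff] at h0 ⊢
    simp only [hp]
    exact ih h0

theorem filter_swap {V : Type} (f : V → Bool) (η β : List V) {X Y : V} (h : f X ≠ f Y) :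
    (η ++ X :: Y :: β).filter f = (η ++ Y :: X :: β).filter f := by
  cases hX : f X <;> cases hY : f Y <;> simp_all

theorem inv2 {γ : List (Fin 5)} {w : List (Fin 4)} (h : MyD γ w) : 0 ∉ γ → ∀ m,
    γ.filter exCls = List.replicate m 1 ++ [2] → ∀ p q, w = p ++ 2 :: q →
    p.count 1 = p.count 0 + m := by
  induction h with
  | nil => intro _ m _ p q h; simp at h
  | @prod X a γ β w h hd ih =>
    intro h0 m hm p q e
    rw [List.mem_cons, not_or] at h0
    have h1 : 0 ∉ γ ++ β := by
      rcases exProds_cases h (Ne.symm h0.1) with ⟨rfl, rfl, rfl | rfl⟩ | ⟨rfl, rfl, rfl⟩ |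
        ⟨rfl, rfl, rfl⟩ | ⟨rfl, rfl, rfl⟩ <;> simp [h0.2]
    have i1 := inv1 hd h1
    have hcase := exProds_cases h (Ne.symm h0.1)
    by_cases hX : X = 2
    · subst hX
      obtain ⟨rfl, rfl⟩ : a = 2 ∧ γ = [] := by simpa using hcase
      cases m with
      | succ m => simp [exCls, List.replicate_succ] at hm
      | zero =>
        have hβ : β.count 2 = 0 := by
          rw [List.count_eq_zero]
          intro hb
          have : (2 : Fin 5) ∈ β.filter exCls := List.mem_filter.mpr ⟨hb, by decide⟩
          simp [exCls] at hm
          exact absurd rfl (hm 2 hb).2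
        cases p with
        | nil => simp
        | cons c p =>
          simp only [List.cons_append, List.cons.injEq] at e
          have := i1.2.2.1
          rw [e.2] at this
          simp at this
          simp_all
    · cases p with
      | nil =>
        simp only [List.nil_append, List.cons.injEq] at e
        obtain ⟨rfl, rfl⟩ := e
        simp [hX] at hcase
      | cons c p =>
        simp only [List.cons_append, List.cons.injEq] at e
        obtain ⟨rfl, e⟩ := e
        rcases hcase with ⟨rfl, rfl, rfl | rfl⟩ | ⟨rfl, rfl, rfl⟩ | ⟨rfl, rfl, rfl⟩ | ⟨rfl, rfl, rfl⟩
        · have := ih h1 (m + 1) (by simp [exCls, List.replicate_succ] at hm ⊢; exact hm) p q e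
          simp at this ⊢
          omega
        · have := ih h1 (m + 1) (by simp [exCls, List.replicate_succ] at hm ⊢; exact hm) p q e
          simp at this ⊢
          omega
        · cases m with
          | zero => simp [exCls] at hm
          | succ m =>
            have := ih h1 m (by simp [exCls, List.replicate_succ] at hm ⊢; exact hm) p q e
            simp at this ⊢
            omega
        · exact absurd rfl hX
        · have := ih h1 m (by simp [exCls] at hm ⊢; exact hm) p q e
          simp at this ⊢
          omega
  | swap h _ ih =>
    intro h0 m hm
    rw [(swap_perm _ _ _ _).mem_iff] at h0
    rw [filter_swap _ _ _ h] at hm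
    exact ih h0 m hm

theorem inv3 {γ : List (Fin 5)} {w : List (Fin 4)} (h : MyD γ w) : 0 ∉ γ →
    4 ∉ (γ.filter (fun x => !exCls x)).tail → ∀ p q, w = p ++ 3 :: q → 0 ∉ q := by
  induction h with
  | nil => intro _ _ p q h; simp at h
  | @prod X a γ β w h hd ih =>
    intro h0 hm p q e
    rw [List.mem_cons, not_or] at h0
    have h1 : 0 ∉ γ ++ β := by
      rcases exProds_cases h (Ne.symm h0.1) with ⟨rfl, rfl, rfl | rfl⟩ | ⟨rfl, rfl, rfl⟩ |
        ⟨rfl, rfl, rfl⟩ | ⟨rfl, rfl, rfl⟩ <;> simp [h0.2]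
    have i1 := inv1 hd h1
    have hcase := exProds_cases h (Ne.symm h0.1)
    by_cases hX : X = 3
    · subst hX
      obtain ⟨rfl, rfl⟩ : a = 3 ∧ γ = [] := by simpa using hcase
      have hβ : 4 ∉ β := by
        intro hb
        apply hm
        simp [exCls]
        exact hb
      have h4 := List.count_eq_zero.mp (i1.2.2.2 hβ)
      intro hq
      apply h4
      cases p with
      | nil =>
        simp only [List.nil_append, List.cons.injEq] at e
        rw [e.2]; exact hq
      | cons c p =>
        simp only [List.cons_append, List.cons.injEq] at e
        rw [e.2]; simp [hq]
    · cases p with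
      | nil =>
        simp only [List.nil_append, List.cons.injEq] at e
        obtain ⟨rfl, rfl⟩ := e
        simp [hX] at hcase
      | cons c p =>
        simp only [List.cons_append, List.cons.injEq] at e
        obtain ⟨rfl, e⟩ := e
        refine ih h1 ?_ p q e
        rcases hcase with ⟨rfl, rfl, rfl | rfl⟩ | ⟨rfl, rfl, rfl⟩ | ⟨rfl, rfl, rfl⟩ | ⟨rfl, rfl, rfl⟩
        · simpa [exCls] using hm
        · simpa [exCls] using hm
        · simpa [exCls] using hm
        · simpa [exCls] using hm
        · exact absurd rfl hX
  | swap h _ ih =>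
    intro h0 hm
    rw [(swap_perm _ _ _ _).mem_iff] at h0
    rw [filter_swap _ _ _ (by simpa using h)] at hm
    exact ih h0 hm

theorem myD_single {X : Fin 5} {w : List (Fin 4)} (h : MyD [X] w) :
    ∃ a γ w', (X, a, γ) ∈ exProds ∧ MyD γ w' ∧ w = a :: w' := by
  generalize hk : [X] = k at h
  cases h with
  | nil => cases hk
  | prod h hd =>
    cases hk
    exact ⟨_, _, _, h, by simpa using hd, rfl⟩
  | @swap η β Y Z w h hd =>
    have := congrArg List.length hk
    simp at this
    omega

theorem myD_nil {w : List (Fin 4)} (h : MyD [] w) : w = [] := by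
  generalize hk : [] = k at h
  cases h with
  | nil => rfl
  | prod h hd => cases hk
  | @swap η β Y Z w h hd =>
    have := congrArg List.length hk
    simp at this

theorem exG_inv {w : List (Fin 4)} (h : w ∈ exG.lang) :
    (∃ p q : Fin 4, p < q ∧ w = [p, q]) ∨ ∃ w', w = 0 :: w' ∧ MyD [4, 3, 1, 2] w' := by
  obtain ⟨a, γ, w', hp, hd, rfl⟩ := myD_single (myD_of h)
  have s1 : ∀ w, MyD [1] w → w = [1] := by
    intro w h
    obtain ⟨a, γ, w', hp, hd, rfl⟩ := myD_single h
    obtain ⟨rfl, rfl⟩ : a = 1 ∧ γ = [] := by simpa using exProds_cases hp (by decide)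
    rw [myD_nil hd]
  have s2 : ∀ w, MyD [2] w → w = [2] := by
    intro w h
    obtain ⟨a, γ, w', hp, hd, rfl⟩ := myD_single h
    obtain ⟨rfl, rfl⟩ : a = 2 ∧ γ = [] := by simpa using exProds_cases hp (by decide)
    rw [myD_nil hd]
  have s3 : ∀ w, MyD [3] w → w = [3] := by
    intro w h
    obtain ⟨a, γ, w', hp, hd, rfl⟩ := myD_single h
    obtain ⟨rfl, rfl⟩ : a = 3 ∧ γ = [] := by simpa using exProds_cases hp (by decide)
    rw [myD_nil hd]
  have hp' : (a = 0 ∧ γ = [4, 3, 1, 2]) ∨ (a = 0 ∧ γ = [1]) ∨ (a = 0 ∧ γ = [2]) ∨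
      (a = 0 ∧ γ = [3]) ∨ (a = 1 ∧ γ = [2]) ∨ (a = 1 ∧ γ = [3]) ∨ (a = 2 ∧ γ = [3]) := by
    have e : exG.start = (0 : Fin 5) := rfl
    rw [e] at hp
    simp [exProds] at hp
    tauto
  rcases hp' with ⟨rfl, rfl⟩ | ⟨rfl, rfl⟩ | ⟨rfl, rfl⟩ | ⟨rfl, rfl⟩ | ⟨rfl, rfl⟩ | ⟨rfl, rfl⟩ |
    ⟨rfl, rfl⟩
  · exact Or.inr ⟨w', rfl, hd⟩
  · exact Or.inl ⟨0, 1, by decide, by rw [s1 _ hd]⟩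
  · exact Or.inl ⟨0, 2, by decide, by rw [s2 _ hd]⟩
  · exact Or.inl ⟨0, 3, by decide, by rw [s3 _ hd]⟩
  · exact Or.inl ⟨1, 2, by decide, by rw [s2 _ hd]⟩
  · exact Or.inl ⟨1, 3, by decide, by rw [s3 _ hd]⟩
  · exact Or.inl ⟨2, 3, by decide, by rw [s3 _ hd]⟩

/-! Membership. -/

theorem move_right {X : Fin 5} (hX : exCls X = true) (k : ℕ) {η β : List (Fin 5)}
    {w : List (Fin 4)} (h : MyD (η ++ List.replicate k 3 ++ X :: β) w) :
    MyD (η ++ X :: (List.replicate k 3 ++ β)) w := by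
  induction k generalizing η with
  | zero => simpa using h
  | succ k ih =>
    rw [List.replicate_succ, List.cons_append]
    refine .swap (by rw [hX]; decide) ?_
    have := ih (η := η ++ [3]) (by simpa [List.replicate_succ] using h)
    simpa using this

theorem move_left {X : Fin 5} (hX : exCls X = true) (k : ℕ) {η β : List (Fin 5)}
    {w : List (Fin 4)} (h : MyD (η ++ X :: (List.replicate k 3 ++ β)) w) :
    MyD (η ++ List.replicate k 3 ++ X :: β) w := by
  induction k generalizing η with
  | zero => simpa using h
  | succ k ih =>
    have h2 : MyD ((η ++ [3]) ++ X :: (List.replicate k 3 ++ β)) w := by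
      have h3 : MyD (η ++ 3 :: X :: (List.replicate k 3 ++ β)) w :=
        .swap (by rw [hX]; decide) (by simpa [List.replicate_succ] using h)
      simpa using h3
    have := ih h2
    simpa [List.replicate_succ] using this

theorem mem_b (k : ℕ) : MyD (List.replicate k 3) (List.replicate k 3) := by
  induction k with
  | zero => exact .nil
  | succ k ih => exact .prod (γ := []) (by simp [exProds]) ih

theorem mem_c (k m : ℕ) : MyD (List.replicate k 3 ++ (List.replicate m 1 ++ [2]))
    (List.replicate m 1 ++ 2 :: List.replicate k 3) := by
  induction m with
  | zero =>
    refine move_left (X := 2) (η := []) (by decide) k ?_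
    exact .prod (γ := []) (by simp [exProds]) (by simpa using mem_b k)
  | succ m ih =>
    refine move_left (X := 1) (η := []) (β := List.replicate m 1 ++ [2]) (by decide) k ?_
    exact .prod (γ := []) (by simp [exProds]) ih

theorem mem_a (j k m : ℕ) : MyD (4 :: (List.replicate k 3 ++ (List.replicate m 1 ++ [2])))
    (List.replicate (j + 1) 0 ++ (List.replicate (m + j + 1) 1 ++
      2 :: List.replicate (k + j + 1) 3)) := by
  induction j generalizing k m with
  | zero =>
    refine .prod (γ := [3, 1]) (by simp [exProds]) ?_
    refine move_right (η := [3]) (X := 1) (by decide) k ?_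
    exact mem_c (k + 1) (m + 1)
  | succ j ih =>
    rw [List.replicate_succ]
    refine .prod (γ := [4, 3, 1]) (by simp [exProds]) ?_
    refine move_right (η := [4, 3]) (X := 1) (by decide) k ?_
    have := ih (k + 1) (m + 1)
    rw [show m + 1 + j + 1 = m + (j + 1) + 1 by omega,
      show k + 1 + j + 1 = k + (j + 1) + 1 by omega] at this
    exact this

theorem exG_word (n : ℕ) (hn : 2 ≤ n) : wordW n ∈ exG.lang := by
  obtain ⟨j, rfl⟩ := Nat.exists_eq_add_of_le hn
  have h := mem_a j 1 1
  have : MyD [0] (wordW (2 + j)) := by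
    have e : wordW (2 + j) = 0 :: (List.replicate (j + 1) 0 ++ (List.replicate (1 + j + 1) 1 ++
      2 :: List.replicate (1 + j + 1) 3)) := by
      unfold wordW
      rw [show 2 + j = j + 1 + 1 by omega, show 1 + j + 1 = j + 1 + 1 by omega]
      rw [List.replicate_succ (n := j + 1) (a := (0 : Fin 4))]
      simp only [List.cons_append, List.append_assoc]
    rw [e]
    exact .prod (γ := [4, 3, 1, 2]) (by simp [exProds]) h
  exact of_myD this

theorem exG_pair (p q : Fin 4) (h : p < q) : [p, q] ∈ exG.lang := by
  have key : ∀ p q : Fin 4, p < q → (0, p, [q.castSucc]) ∈ exProds ∧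
      (q.castSucc, q, []) ∈ exProds := by decide
  obtain ⟨h1, h2⟩ := key p q h
  exact of_myD (γ := [0]) (.prod h1 (.prod h2 .nil))

theorem exG_props : LangProps exG.lang := by
  refine ⟨?_, ?_, ?_, exG_word⟩
  · intro w hw
    rcases exG_inv hw with ⟨p, q, -, rfl⟩ | ⟨w', rfl, hd⟩
    · have h0 := List.count_le_length (a := (0 : Fin 4)) (l := [p, q])
      have h1 := List.count_le_length (a := (1 : Fin 4)) (l := [p, q])
      have h3 := List.count_le_length (a := (3 : Fin 4)) (l := [p, q])
      simp only [List.length_cons, List.length_nil] at h0 h1 h3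
      omega
    · have := inv1 hd (by decide)
      simp at this ⊢
      omega
  · intro p q hw hl
    rcases exG_inv hw with ⟨p', q', -, e⟩ | ⟨w', e, hd⟩
    · rw [e] at hl; simp at hl
    · cases p with
      | nil => simp at e
      | cons c p =>
        simp only [List.cons_append, List.cons.injEq] at e
        obtain ⟨rfl, e⟩ := e
        have := inv2 hd (by decide) 1 (by decide) p q e.symm
        simp [this]
  · intro p q hw hl
    rcases exG_inv hw with ⟨p', q', -, e⟩ | ⟨w', e, hd⟩
    · rw [e] at hl; simp at hl
    · cases p with
      | nil => simp at e
      | cons c p =>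
        simp only [List.cons_append, List.cons.injEq] at e
        obtain ⟨rfl, e⟩ := e
        exact inv3 hd (by decide) (by decide) p q e.symm

theorem exG_not_pair (p q : Fin 4) (h : p < q) : [q, p] ∉ exG.lang := by
  intro hw
  rcases exG_inv hw with ⟨p', q', h', e⟩ | ⟨w', e, hd⟩
  · simp only [List.cons.injEq] at e
    obtain ⟨rfl, rfl, -⟩ := e
    exact lt_asymm h h'
  · simp only [List.cons.injEq] at e
    obtain ⟨rfl, -⟩ := e
    exact absurd h (by simp)


/-- some language is in trPCCFL but neither in shuffleCFL nor in traceCFL. -/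
theorem exists_trpccfl_not_shufflecfl_not_tracecfl :
    ∃ (α : Type) (_ : Finite α) (L : Set (List α)),
      IsTrPCCFL L ∧ ¬ IsShuffleCFL L ∧ ¬ IsTraceCFL L := by
  refine ⟨Fin 4, inferInstance, exG.lang, ⟨exG, ?_, rfl⟩, not_shuffle exG_props,
    not_trace exG_props fun p q h => ⟨exG_pair p q h, exG_not_pair p q h⟩⟩
  intro X Y Z h1 h2 h3
  exact h3 ((not_not.mp h1).trans (not_not.mp h2))
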